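/- Let V be a type, w : V → V → ℝ≥0∞ a weight function, k ≥ 1 a natural number, and b : Fin k → V. Define the augmented weighted digraph on V' = V ⊕ Fin k by w'(inl x, inl y) = w(x,y) for x,y ∈ V, w'(inr i, inl (b i)) = 0 for every i, and w'(p,q) = ∞ for every other pair (in particular all edges between the new vertices, including the cycle edges (inr i, inr (i+1 mod k)), have weight ∞). Then distances are preserved and transferred: for all x, y ∈ V, d_{w'}(inl x, inl y) = d_w(x, y), and for every i ∈ Fin k and x ∈ V, d_{w'}(inr i, inl x) = d_w(b i, x). (This justifies the appendix transformation: any query (b_i, u) in the original graph can be answered by querying (r_i, u) in the transformed graph.) -/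

import Mathlib

/-! Collapse each new vertex `inr i` onto `b i`. Along every edge `(p, q)` of the augmented digraph,
the function `p ↦ d_w(π p, v)`, with `π` the collapsing map, drops by at most the weight of `(p, q)`:
an edge of the original digraph satisfies the triangle inequality, an edge `inr i → inl (b i)` does
not move the collapsed vertex, and every other pair has weight `∞`. Summing along a walk,
no augmented walk is lighter than the original distance between the collapsed endpoints
(`wDist_collapse_le_walkWeight`). Conversely, a walk of the original digraph embeds with the same
weight, and prepending `inr i` to an embedded walk that starts at `b i` costs nothing. -/

open scoped ENNReal

/-- A walk from `u` to `v`: a nonempty list with head `u` and last element `v`. -/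
def IsWalk {V : Type*} (p : List V) (u v : V) : Prop :=
  p ≠ [] ∧ p.head? = some u ∧ p.getLast? = some v

/-- The weight of a walk: the sum of `w x y` over consecutive pairs of the list. -/
noncomputable def walkWeight {V : Type*} (w : V → V → ℝ≥0∞) (p : List V) : ℝ≥0∞ :=
  ((p.zip p.tail).map fun e => w e.1 e.2).sum

/-- The distance from `u` to `v`: the infimum of the weights of walks from `u` to `v`. -/
noncomputable def wDist {V : Type*} (w : V → V → ℝ≥0∞) (u v : V) : ℝ≥0∞ :=
  ⨅ (p : List V) (_ : IsWalk p u v), walkWeight w p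

/- The augmented digraph on `V ⊕ Fin k`: original edges keep their weight, each
new vertex `inr i` gets a zero-weight edge to `inl (b i)`, and every other pair
(including all edges between new vertices) gets weight `∞`. -/
open Classical in
noncomputable def augW {V : Type*} {k : ℕ} (w : V → V → ℝ≥0∞) (b : Fin k → V) :
    (V ⊕ Fin k) → (V ⊕ Fin k) → ℝ≥0∞
  | .inl x, .inl y => w x y
  | .inr i, .inl y => if y = b i then 0 else ∞
  | _, _ => ∞

theorem walkWeight_cons_cons {V : Type*} (w : V → V → ℝ≥0∞) (a c : V) (l : List V) :
    walkWeight w (a :: c :: l) = w a c + walkWeight w (c :: l) := by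
  simp [walkWeight]

theorem wDist_le_walkWeight {V : Type*} (w : V → V → ℝ≥0∞) {p : List V} {u v : V}
    (h : IsWalk p u v) : wDist w u v ≤ walkWeight w p :=
  iInf₂_le p h

theorem wDist_self {V : Type*} (w : V → V → ℝ≥0∞) (u : V) : wDist w u u = 0 := by
  have h := wDist_le_walkWeight w (p := [u]) (u := u) (v := u) (by simp [IsWalk])
  simpa [walkWeight] using h

/-- The distance to a fixed target drops by at most the weight of an edge. -/
theorem wDist_le_add {V : Type*} (w : V → V → ℝ≥0∞) (u x v : V) :
    wDist w u v ≤ w u x + wDist w x v := by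
  conv_rhs => rw [wDist]
  simp only [ENNReal.add_iInf]
  refine le_iInf₂ fun p hp => ?_
  obtain ⟨hne, hhd, hlast⟩ := hp
  cases p with
  | nil => exact absurd rfl hne
  | cons c l =>
    obtain rfl : c = x := by simpa using hhd
    rw [← walkWeight_cons_cons]
    exact wDist_le_walkWeight w ⟨by simp, by simp, by simpa using hlast⟩

/-- The map from the augmented digraph to the original one that sends each new vertex `inr i`
to its attachment point `b i`. -/
def collapse {V : Type*} {k : ℕ} (b : Fin k → V) : V ⊕ Fin k → V :=
  Sum.elim id b

theorem wDist_collapse_le_add {V : Type*} {k : ℕ} (w : V → V → ℝ≥0∞) (b : Fin k → V)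
    (p q : V ⊕ Fin k) (v : V) :
    wDist w (collapse b p) v ≤ augW w b p q + wDist w (collapse b q) v := by
  rcases p with x | i <;> rcases q with y | j
  · exact wDist_le_add w x y v
  · simp [augW]
  · by_cases h : y = b i <;> simp [augW, collapse, h]
  · simp [augW]

/-- An augmented walk is at least as heavy as the original distance between its collapsed
endpoints. -/
theorem wDist_collapse_le_walkWeight {V : Type*} {k : ℕ} (w : V → V → ℝ≥0∞) (b : Fin k → V)
    (p : List (V ⊕ Fin k)) (u v : V ⊕ Fin k) (h : IsWalk p u v) :
    wDist w (collapse b u) (collapse b v) ≤ walkWeight (augW w b) p := by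
  induction p generalizing u with
  | nil => exact absurd rfl h.1
  | cons a l ih =>
    obtain ⟨-, hhd, hlast⟩ := h
    obtain rfl : a = u := by simpa using hhd
    cases l with
    | nil =>
      obtain rfl : a = v := by simpa using hlast
      simp [wDist_self]
    | cons c l =>
      rw [walkWeight_cons_cons]
      have hc : IsWalk (c :: l) c v := ⟨by simp, by simp, by simpa using hlast⟩
      exact (wDist_collapse_le_add w b a c _).trans (by gcongr; exact ih c hc)

theorem walkWeight_map_inl {V : Type*} {k : ℕ} (w : V → V → ℝ≥0∞) (b : Fin k → V)
    (p : List V) : walkWeight (augW w b) (p.map Sum.inl) = walkWeight w p := by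
  induction p with
  | nil => simp [walkWeight]
  | cons a l ih =>
    cases l with
    | nil => simp [walkWeight]
    | cons c l =>
      simp only [List.map_cons, walkWeight_cons_cons] at ih ⊢
      rw [ih, augW]

theorem wDist_collapse_le {V : Type*} {k : ℕ} (w : V → V → ℝ≥0∞) (b : Fin k → V)
    (u v : V ⊕ Fin k) : wDist w (collapse b u) (collapse b v) ≤ wDist (augW w b) u v :=
  le_iInf₂ fun p hp => wDist_collapse_le_walkWeight w b p u v hp

theorem wDist_inl_le {V : Type*} {k : ℕ} (w : V → V → ℝ≥0∞) (b : Fin k → V) (x y : V) :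
    wDist (augW w b) (.inl x) (.inl y) ≤ wDist w x y := by
  refine le_iInf₂ fun p hp => ?_
  rw [← walkWeight_map_inl w b p]
  obtain ⟨hne, hhd, hlast⟩ := hp
  exact wDist_le_walkWeight _ ⟨by simpa using hne, by simp [hhd], by simp [hlast]⟩

/-- The appendix transformation preserves distances: distances between original
vertices are unchanged, and the distance from a new vertex `inr i` to an
original vertex equals the original distance from `b i`. -/
theorem augmented_graph_preserves_dist {V : Type*} (w : V → V → ℝ≥0∞)
    (k : ℕ) (hk : 1 ≤ k) (b : Fin k → V) :
    (∀ x y : V, wDist (augW w b) (.inl x) (.inl y) = wDist w x y) ∧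
    (∀ (i : Fin k) (x : V), wDist (augW w b) (.inr i) (.inl x) = wDist w (b i) x) := by
  refine ⟨fun x y => (wDist_inl_le w b x y).antisymm (wDist_collapse_le w b (.inl x) (.inl y)),
    fun i x => le_antisymm ?_ (wDist_collapse_le w b (.inr i) (.inl x))⟩
  calc wDist (augW w b) (.inr i) (.inl x)
      ≤ augW w b (.inr i) (.inl (b i)) + wDist (augW w b) (.inl (b i)) (.inl x) :=
        wDist_le_add _ _ _ _
    _ = wDist (augW w b) (.inl (b i)) (.inl x) := by simp [augW]
    _ ≤ wDist w (b i) x := wDist_inl_le w b (b i) x
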